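/- Let R > 0 and let γ(t) = R·(cos 2πt, sin 2πt), t ∈ [0,1], be a loop of winding number 1 around the origin. Let ω be the connection 1-form of the cone metric, ω(p; X) = (1/(2r²))·Xᵀ·g(p)·(−p₂, p₁). If v : [0,1] → ℝ² is a C¹ solution of the parallel transport equation v'(t) = ω(γ(t); γ'(t))·(−v₂(t), v₁(t)), then v(1) = −v(0). In particular, parallel transport around a simple loop enclosing the origin acts as −Id on frame components, so the holonomy of the cone metric on ℝ² \ {0} contains the element of order 2 (rotation by π). -/

import Mathlib

open Real Matrix

/-- The cone metric on `ℝ² \ {0}`. -/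
noncomputable def coneMetric (x y : ℝ) : Matrix (Fin 2) (Fin 2) ℝ :=
  !![1 + 3 * x ^ 2 / (x ^ 2 + y ^ 2), 3 * x * y / (x ^ 2 + y ^ 2);
     3 * x * y / (x ^ 2 + y ^ 2), 1 + 3 * y ^ 2 / (x ^ 2 + y ^ 2)]

/-- The connection 1-form of the cone metric:
`ω(p; X) = (1/(2r²))·Xᵀ·g(p)·(−p₂, p₁)`. -/
noncomputable def connForm (p : ℝ × ℝ) (X : ℝ × ℝ) : ℝ :=
  (1 / (2 * (p.1 ^ 2 + p.2 ^ 2))) *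
    (![X.1, X.2] ⬝ᵥ coneMetric p.1 p.2 *ᵥ ![-p.2, p.1])

/-!
The metric is `g = 1 + 3 r⁻² p pᵀ`, so it fixes the angular vector `(-p₂, p₁)`, and the connection
form is half the angular form: `ω = dϑ / 2 = Im (dz / z) / 2` in the coordinate `z = x + i y`.
A parallel field, read as a complex number, solves `u' = i (ϑ' / 2) u`, so it is turned by half of
the angle that the curve sweeps out about the origin: a full turn rotates it by `π`.
-/

section ConnectionForm

open Complex (equivRealProdCLM)

lemma coneMetric_mulVec_angular (x y : ℝ) : coneMetric x y *ᵥ ![-y, x] = ![-y, x] := by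
  ext i
  fin_cases i <;> simp [coneMetric, mulVec, dotProduct] <;> ring

lemma connForm_eq_cross_div (p X : ℝ × ℝ) :
    connForm p X = (p.1 * X.2 - p.2 * X.1) / (p.1 ^ 2 + p.2 ^ 2) / 2 := by
  rw [connForm, coneMetric_mulVec_angular, vec2_dotProduct, one_div, mul_inv]
  simp only [cons_val_zero, cons_val_one]
  ring

lemma connForm_eq_im_div (p X : ℝ × ℝ) :
    connForm p X = (equivRealProdCLM.symm X / equivRealProdCLM.symm p).im / 2 := by
  rw [connForm_eq_cross_div, Complex.div_im]
  simp only [Complex.equivRealProdCLM_symm_apply, Complex.normSq_add_mul_I, Complex.add_re,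
    Complex.add_im, Complex.re_ofReal_mul, Complex.im_ofReal_mul, Complex.ofReal_re,
    Complex.ofReal_im, Complex.I_re, Complex.I_im]
  ring

end ConnectionForm

section Calculus

variable {s : Set ℝ}

lemma eq_exp_smul_of_hasDerivWithinAt_smul {E : Type*} [NormedAddCommGroup E] [NormedSpace ℂ E]
    {u : ℝ → E} {c c' : ℝ → ℂ} (hs : Convex ℝ s)
    (hc : ∀ t ∈ s, HasDerivWithinAt c (c' t) s t)
    (hu : ∀ t ∈ s, HasDerivWithinAt u (c' t • u t) s t) {a b : ℝ} (ha : a ∈ s) (hb : b ∈ s) :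
    u b = Complex.exp (c b - c a) • u a := by
  have hconst : Complex.exp (-c b) • u b = Complex.exp (-c a) • u a := by
    have hderiv : ∀ t ∈ s, HasDerivWithinAt (fun x ↦ Complex.exp (-c x) • u x) 0 s t := by
      intro t ht
      refine ((hc t ht).neg.cexp.smul (hu t ht)).congr_deriv ?_
      module
    simpa [sub_eq_zero] using
      hs.norm_image_sub_le_of_norm_hasDerivWithin_le (C := 0) hderiv (by simp) ha hb
  calc u b = Complex.exp (c b) • Complex.exp (-c b) • u b := by
        rw [smul_smul, ← Complex.exp_add, add_neg_cancel, Complex.exp_zero, one_smul]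
    _ = Complex.exp (c b - c a) • u a := by
        rw [hconst, smul_smul, ← Complex.exp_add, sub_eq_add_neg]

lemma arg_polar_div_polar {r₁ r₂ θ₁ θ₂ : ℝ} (hr₁ : 0 < r₁) (hr₂ : 0 < r₂)
    (hθ : |θ₂ - θ₁| < π) :
    ((r₂ * Complex.exp (θ₂ * Complex.I)) / (r₁ * Complex.exp (θ₁ * Complex.I))).arg = θ₂ - θ₁ := by
  have hpolar : (r₂ * Complex.exp (θ₂ * Complex.I)) / (r₁ * Complex.exp (θ₁ * Complex.I))
      = (r₂ / r₁ : ℝ) * Complex.exp ((θ₂ - θ₁ : ℝ) * Complex.I) := by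
    rw [mul_div_mul_comm, ← Complex.exp_sub, ← sub_mul]
    push_cast
    rfl
  rw [hpolar, Complex.exp_mul_I]
  exact Complex.arg_mul_cos_add_sin_mul_I (div_pos hr₂ hr₁)
    ⟨(abs_lt.1 hθ).1, (abs_lt.1 hθ).2.le⟩

/-- Near `t` the continuous angle is `θ t + arg (z / z t)`, which is differentiable as `z / z t` is
close to `1`. -/
lemma hasDerivWithinAt_angle {z : ℝ → ℂ} {z' : ℂ} {r θ : ℝ → ℝ} {t : ℝ} (ht : t ∈ s)
    (hz : HasDerivWithinAt z z' s t) (hr : ∀ x ∈ s, 0 < r x) (hθ : ContinuousWithinAt θ s t)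
    (hpolar : ∀ x ∈ s, z x = r x * Complex.exp (θ x * Complex.I)) :
    HasDerivWithinAt θ (z' / z t).im s t := by
  have hz₀ : z t ≠ 0 := by
    rw [hpolar t ht]
    exact mul_ne_zero (Complex.ofReal_ne_zero.2 (hr t ht).ne') (Complex.exp_ne_zero _)
  have hlog : HasDerivWithinAt (fun x ↦ Complex.log (z x / z t)) (z' / z t) s t := by
    simpa [div_self hz₀] using (hz.div_const (z t)).clog_real (by simp [div_self hz₀])
  have harg : HasDerivWithinAt (fun x ↦ θ t + (z x / z t).arg) (z' / z t).im s t := by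
    simpa [Function.comp_def, Complex.log_im] using
      (Complex.imCLM.hasFDerivAt.comp_hasDerivWithinAt t hlog).const_add (θ t)
  refine harg.congr_of_eventuallyEq_of_mem ?_ ht
  have hclose : ∀ᶠ x in nhdsWithin t s, |θ x - θ t| < π :=
    hθ.eventually (Metric.ball_mem_nhds (θ t) pi_pos)
  filter_upwards [hclose, self_mem_nhdsWithin] with x hx hxs
  rw [hpolar x hxs, hpolar t ht, arg_polar_div_polar (hr t ht) (hr x hxs) hx,
    add_sub_cancel]

end Calculus

section ParallelTransport

open Complex (equivRealProdCLM)

/-- The frame components `v` form a parallel field on the time set `s` along the curve `γ` with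
velocity `γ'`. The velocity is a separate argument, so that no junk value of `derivWithin` enters
where `γ` is not differentiable. -/
def IsParallelAlong (γ γ' v : ℝ → ℝ × ℝ) (s : Set ℝ) : Prop :=
  ∀ t ∈ s, HasDerivWithinAt v (connForm (γ t) (γ' t) • (-(v t).2, (v t).1)) s t

variable {γ γ' v : ℝ → ℝ × ℝ} {s : Set ℝ} {r θ : ℝ → ℝ} {a b : ℝ}

lemma equivRealProdCLM_symm_polar (r θ : ℝ) :
    equivRealProdCLM.symm (r * cos θ, r * sin θ) = r * Complex.exp (θ * Complex.I) := by
  rw [Complex.equivRealProdCLM_symm_apply, Complex.exp_mul_I]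
  push_cast
  ring

lemma equivRealProdCLM_symm_smul_perp (k : ℝ) (w : ℝ × ℝ) :
    equivRealProdCLM.symm (k • (-w.2, w.1)) = (k * Complex.I) • equivRealProdCLM.symm w := by
  apply Complex.ext <;> simp [Complex.equivRealProdCLM_symm_apply]

theorem IsParallelAlong.eq_exp_half_angle_mul (hv : IsParallelAlong γ γ' v s) (hs : Convex ℝ s)
    (hγ : ∀ t ∈ s, HasDerivWithinAt γ (γ' t) s t) (hr : ∀ t ∈ s, 0 < r t)
    (hθ : ContinuousOn θ s) (hpolar : ∀ t ∈ s, γ t = (r t * cos (θ t), r t * sin (θ t)))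
    (ha : a ∈ s) (hb : b ∈ s) :
    equivRealProdCLM.symm (v b) =
      Complex.exp (((θ b - θ a) / 2 : ℝ) * Complex.I) * equivRealProdCLM.symm (v a) := by
  have hangle : ∀ t ∈ s, HasDerivWithinAt (fun x ↦ θ x / 2) (connForm (γ t) (γ' t)) s t := by
    intro t ht
    rw [connForm_eq_im_div]
    refine (hasDerivWithinAt_angle ht
      (equivRealProdCLM.symm.hasFDerivAt.comp_hasDerivWithinAt t (hγ t ht)) hr (hθ t ht)
      fun x hx ↦ ?_).div_const 2
    rw [Function.comp_apply, hpolar x hx, equivRealProdCLM_symm_polar]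
  have hphase : ∀ t ∈ s, HasDerivWithinAt (fun x ↦ ((θ x / 2 : ℝ) : ℂ) * Complex.I)
      (connForm (γ t) (γ' t) * Complex.I) s t :=
    fun t ht ↦ (hangle t ht).ofReal_comp.mul_const Complex.I
  have hfield : ∀ t ∈ s, HasDerivWithinAt (fun x ↦ equivRealProdCLM.symm (v x))
      ((connForm (γ t) (γ' t) * Complex.I) • equivRealProdCLM.symm (v t)) s t := by
    intro t ht
    rw [← equivRealProdCLM_symm_smul_perp]
    exact equivRealProdCLM.symm.hasFDerivAt.comp_hasDerivWithinAt t (hv t ht)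
  rw [eq_exp_smul_of_hasDerivWithinAt_smul hs hphase hfield ha hb, smul_eq_mul, ← sub_mul,
    sub_div, Complex.ofReal_sub]

/-- The integer `n` is the winding number about the origin of a loop with continuous angle `θ`. -/
theorem holonomy_of_simple_loop_general (hs : Convex ℝ s)
    (hγ : ∀ t ∈ s, HasDerivWithinAt γ (γ' t) s t) (hr : ∀ t ∈ s, 0 < r t)
    (hθ : ContinuousOn θ s) (hpolar : ∀ t ∈ s, γ t = (r t * cos (θ t), r t * sin (θ t)))
    (hv : IsParallelAlong γ γ' v s) (ha : a ∈ s) (hb : b ∈ s) (n : ℤ)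
    (hn : θ b - θ a = n * (2 * π)) :
    v b = (-1 : ℝ) ^ n • v a := by
  apply equivRealProdCLM.symm.injective
  have hrot : Complex.exp (((θ b - θ a) / 2 : ℝ) * Complex.I) = ((-1 : ℝ) ^ n : ℝ) := by
    have hhalf : (θ b - θ a) / 2 = n * π := by rw [hn]; ring
    rw [hhalf]
    push_cast
    rw [mul_assoc, Complex.exp_int_mul, Complex.exp_pi_mul_I]
  rw [hv.eq_exp_half_angle_mul hs hγ hr hθ hpolar ha hb, hrot, map_smul, Complex.real_smul]

lemma hasDerivAt_circle (R t : ℝ) :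
    HasDerivAt (fun x ↦ (R * cos (2 * π * x), R * sin (2 * π * x)))
      (-(2 * π * R * sin (2 * π * t)), 2 * π * R * cos (2 * π * t)) t := by
  have hangle : HasDerivAt (fun x ↦ 2 * π * x) (2 * π) t := by
    simpa using (hasDerivAt_id t).const_mul (2 * π)
  refine ((hangle.cos.const_mul R).prodMk (hangle.sin.const_mul R)).congr_deriv ?_
  ext <;> simp only <;> ring

end ParallelTransport

/-- parallel transport of frame components around a loop of winding
number 1 about the origin acts as `−Id`: any C¹ solution of the parallel
transport equation `v' = ω(γ; γ')·(−v₂, v₁)` along `γ(t) = R(cos 2πt, sin 2πt)`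
satisfies `v(1) = −v(0)`. -/
theorem holonomy_of_simple_loop (R : ℝ) (hR : 0 < R)
    (v : ℝ → ℝ × ℝ)
    (hv : ∀ t ∈ Set.Icc (0 : ℝ) 1,
      HasDerivAt v
        (connForm (R * Real.cos (2 * π * t), R * Real.sin (2 * π * t))
            (-(2 * π * R * Real.sin (2 * π * t)), 2 * π * R * Real.cos (2 * π * t)) •
          (-(v t).2, (v t).1)) t) :
    v 1 = -v 0 := by
  simpa using holonomy_of_simple_loop_general (convex_Icc 0 1)
    (fun t _ ↦ (hasDerivAt_circle R t).hasDerivWithinAt) (fun _ _ ↦ hR) (by fun_prop)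
    (fun _ _ ↦ rfl) (fun t ht ↦ (hv t ht).hasDerivWithinAt) (by simp) (by simp) 1 (by simp)
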